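/- arXiv:0811.3530 — 5 statements merged into one kernel-verified Lean document; each statement's English description precedes it below -/
import Mathlib

section
/- Let Γ ∈ ℝ^{p×p} be a connected interconnection. Then 0 is an algebraically simple eigenvalue of Γ (a root of multiplicity one of its characteristic polynomial), and every other eigenvalue λ of Γ over ℂ satisfies Re(λ) < 0. -/
open Matrix Filter Topology
open scoped Kronecker

/-- `Γ` is an interconnection: off-diagonal entries are nonnegative and each diagonal
entry is minus the sum of the other entries in its row (equivalently, rows sum to zero). -/
def IsInterconnection {p : ℕ} (Γ : Matrix (Fin p) (Fin p) ℝ) : Prop :=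
  (∀ i j, i ≠ j → 0 ≤ Γ i j) ∧ ∀ i, ∑ j, Γ i j = 0

/-- `Γ` is a connected interconnection: it is an interconnection and its graph
(with an edge `(i, j)` whenever `Γ i j > 0`) has a node reachable by a directed
path from every other node. -/
def IsConnectedInterconnection {p : ℕ} (Γ : Matrix (Fin p) (Fin p) ℝ) : Prop :=
  IsInterconnection Γ ∧
    ∃ k : Fin p, ∀ i : Fin p, Relation.ReflTransGen (fun a b => 0 < Γ a b) i k

/-!
If `Γ` has nonnegative off-diagonal entries and vanishing row sums, then
`(Γ x) i = ∑ j, Γ i j * (x j - x i)`, so `Γ` obeys a maximum principle: `(Γ x) i ≤ 0` where `x` is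
maximal, and if `0 ≤ Γ x`, maximality is passed along edges. A node reachable from every other one
is therefore a maximum of every vector of the kernel, and by symmetry a minimum, so the kernel is
spanned by `1`. The maximum principle also shows that `1` is not in the range. Kernel and range are
thus disjoint, there are no generalized eigenvectors beyond the kernel, and the algebraic
multiplicity of `0` is one.

For the other eigenvalues, each Gershgorin disc has center `Γ i i ≤ 0` and radius `-Γ i i`, hence
meets the closed right half-plane only at `0`.
-/

section EndomorphismKernel

variable {R M : Type*} [CommRing R] [AddCommGroup M] [Module R M] {f : Module.End R M}

theorem apply_eq_zero_of_pow_apply_eq_zero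
    (hf : Disjoint (LinearMap.ker f) (LinearMap.range f)) {m : ℕ} {x : M} (hx : (f ^ m) x = 0) :
    f x = 0 := by
  induction m generalizing x with
  | zero => rw [show x = 0 from hx, map_zero]
  | succ m ih =>
    rw [pow_succ, Module.End.mul_apply] at hx
    exact Submodule.disjoint_def.1 hf _ (ih hx) (LinearMap.mem_range_self f x)

theorem maxGenEigenspace_zero_eq_ker (hf : Disjoint (LinearMap.ker f) (LinearMap.range f)) :
    f.maxGenEigenspace 0 = LinearMap.ker f := by
  ext x
  rw [Module.End.mem_maxGenEigenspace, zero_smul, sub_zero, LinearMap.mem_ker]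
  exact ⟨fun ⟨_, hm⟩ ↦ apply_eq_zero_of_pow_apply_eq_zero hf hm, fun hx ↦ ⟨1, by rwa [pow_one]⟩⟩

end EndomorphismKernel

section MaximumPrinciple

theorem mulVec_apply_eq_sum_mul_sub {n R : Type*} [Fintype n] [NonUnitalNonAssocRing R]
    {A : Matrix n n R} {i : n} (hrow : ∑ j, A i j = 0) (x : n → R) :
    (A *ᵥ x) i = ∑ j, A i j * (x j - x i) := by
  simp only [mul_sub, Finset.sum_sub_distrib, ← Finset.sum_mul, hrow, zero_mul, sub_zero]
  rfl

variable {n R : Type*} [Ring R] [LinearOrder R] [IsStrictOrderedRing R] {A : Matrix n n R}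
  {x : n → R} {i j k : n}

theorem mul_sub_nonpos_of_forall_le (hoff : ∀ j, i ≠ j → 0 ≤ A i j) (hx : ∀ j, x j ≤ x i) (j : n) :
    A i j * (x j - x i) ≤ 0 := by
  obtain rfl | hij := eq_or_ne i j
  · rw [sub_self, mul_zero]
  · exact mul_nonpos_of_nonneg_of_nonpos (hoff j hij) (sub_nonpos.2 (hx j))

variable [Fintype n]

theorem mulVec_apply_nonpos_of_forall_le (hoff : ∀ j, i ≠ j → 0 ≤ A i j)
    (hrow : ∑ j, A i j = 0) (hx : ∀ j, x j ≤ x i) : (A *ᵥ x) i ≤ 0 := by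
  rw [mulVec_apply_eq_sum_mul_sub hrow]
  exact Finset.sum_nonpos fun j _ ↦ mul_sub_nonpos_of_forall_le hoff hx j

theorem eq_of_mulVec_apply_nonneg_of_forall_le (hoff : ∀ j, i ≠ j → 0 ≤ A i j)
    (hrow : ∑ j, A i j = 0) (hx : ∀ j, x j ≤ x i) (hAx : 0 ≤ (A *ᵥ x) i) (hij : 0 < A i j) :
    x j = x i := by
  have hsum : ∑ j, A i j * (x j - x i) = 0 := by
    rw [← mulVec_apply_eq_sum_mul_sub hrow]
    exact (mulVec_apply_nonpos_of_forall_le hoff hrow hx).antisymm hAx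
  have hterm : A i j * (x j - x i) = 0 :=
    (Finset.sum_eq_zero_iff_of_nonpos fun j _ ↦ mul_sub_nonpos_of_forall_le hoff hx j).1 hsum j
      (Finset.mem_univ j)
  exact sub_eq_zero.1 ((mul_eq_zero.1 hterm).resolve_left hij.ne')

variable (hoff : ∀ i j, i ≠ j → 0 ≤ A i j) (hrow : ∀ i, ∑ j, A i j = 0)
include hoff hrow

theorem forall_le_of_reflTransGen (hAx : 0 ≤ A *ᵥ x) (hx : ∀ j, x j ≤ x i)
    (hik : Relation.ReflTransGen (fun a b ↦ 0 < A a b) i k) (j : n) : x j ≤ x k := by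
  induction hik generalizing j with
  | refl => exact hx j
  | @tail b c _ hbc ih =>
    have hcb : x c = x b :=
      eq_of_mulVec_apply_nonneg_of_forall_le (hoff b) (hrow b) ih (hAx b) hbc
    exact (ih j).trans_eq hcb.symm

theorem le_of_mulVec_nonneg (hk : ∀ i, Relation.ReflTransGen (fun a b ↦ 0 < A a b) i k)
    (hAx : 0 ≤ A *ᵥ x) (j : n) : x j ≤ x k := by
  have : Nonempty n := ⟨k⟩
  obtain ⟨i, hi⟩ := Finite.exists_max x
  exact forall_le_of_reflTransGen hoff hrow hAx hi (hk i) j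

theorem eq_of_mulVec_eq_zero (hk : ∀ i, Relation.ReflTransGen (fun a b ↦ 0 < A a b) i k)
    (hAx : A *ᵥ x = 0) (j : n) : x j = x k := by
  refine (le_of_mulVec_nonneg hoff hrow hk hAx.ge j).antisymm (neg_le_neg_iff.1 ?_)
  exact le_of_mulVec_nonneg (x := -x) hoff hrow hk (by rw [mulVec_neg, hAx, neg_zero]) j

theorem nonpos_of_mulVec_eq_const [Nonempty n] {c : R} (hAx : A *ᵥ x = Function.const n c) :
    c ≤ 0 := by
  obtain ⟨i, hi⟩ := Finite.exists_max x
  calc c = (A *ᵥ x) i := by rw [hAx, Function.const_apply]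
    _ ≤ 0 := mulVec_apply_nonpos_of_forall_le (hoff i) (hrow i) hi

theorem eq_zero_of_mulVec_eq_const [Nonempty n] {c : R} (hAx : A *ᵥ x = Function.const n c) :
    c = 0 := by
  refine (nonpos_of_mulVec_eq_const hoff hrow hAx).antisymm (neg_nonpos.1 ?_)
  exact nonpos_of_mulVec_eq_const (x := -x) hoff hrow (by rw [mulVec_neg, hAx]; rfl)

end MaximumPrinciple

section ZeroEigenvalue

variable {n K : Type*} [Fintype n] [DecidableEq n] [Field K] [LinearOrder K]
  [IsStrictOrderedRing K] {A : Matrix n n K} {k : n}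
  (hoff : ∀ i j, i ≠ j → 0 ≤ A i j) (hrow : ∀ i, ∑ j, A i j = 0)
  (hk : ∀ i, Relation.ReflTransGen (fun a b ↦ 0 < A a b) i k)
include hoff hrow hk

theorem ker_toLin'_eq_span_one : LinearMap.ker A.toLin' = Submodule.span K {1} := by
  ext x
  rw [LinearMap.mem_ker, toLin'_apply, Submodule.mem_span_singleton]
  constructor
  · intro hx
    refine ⟨x k, funext fun j ↦ ?_⟩
    rw [eq_of_mulVec_eq_zero hoff hrow hk hx j, Pi.smul_apply, Pi.one_apply, smul_eq_mul, mul_one]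
  · rintro ⟨c, rfl⟩
    have hone : A *ᵥ 1 = 0 := funext fun i ↦ (dotProduct_one (A i)).trans (hrow i)
    rw [mulVec_smul, hone, smul_zero]

theorem disjoint_ker_range_toLin' :
    Disjoint (LinearMap.ker A.toLin') (LinearMap.range A.toLin') := by
  have : Nonempty n := ⟨k⟩
  rw [Submodule.disjoint_def]
  rintro _ hker ⟨y, rfl⟩
  have hconst : A *ᵥ y = Function.const n ((A *ᵥ y) k) :=
    funext (eq_of_mulVec_eq_zero hoff hrow hk hker)
  rw [toLin'_apply, hconst, eq_zero_of_mulVec_eq_const hoff hrow hconst]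
  rfl

theorem rootMultiplicity_zero_charpoly_eq_one : A.charpoly.rootMultiplicity 0 = 1 := by
  have : Nonempty n := ⟨k⟩
  rw [← charpoly_toLin', ← LinearMap.finrank_maxGenEigenspace_eq,
    maxGenEigenspace_zero_eq_ker (disjoint_ker_range_toLin' hoff hrow hk),
    ker_toLin'_eq_span_one hoff hrow hk, finrank_span_singleton one_ne_zero]

end ZeroEigenvalue

theorem rootMultiplicity_charpoly_map {n R S : Type*} [Fintype n] [DecidableEq n] [CommRing R]
    [CommRing S] (A : Matrix n n R) {f : R →+* S} (hf : Function.Injective f) (a : R) :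
    (A.map f).charpoly.rootMultiplicity (f a) = A.charpoly.rootMultiplicity a := by
  rw [charpoly_map, Polynomial.eq_rootMultiplicity_map hf a]

theorem re_neg_of_mem_closedBall_neg {z : ℂ} {a : ℝ} (hz : z ∈ Metric.closedBall (a : ℂ) (-a))
    (hz0 : z ≠ 0) : z.re < 0 := by
  have hdist : ‖z - a‖ ≤ -a := mem_closedBall_iff_norm.1 hz
  have ha : a ≤ 0 := neg_nonneg.1 ((norm_nonneg _).trans hdist)
  have hsq : Complex.normSq (z - a) ≤ a ^ 2 := by
    rw [Complex.normSq_eq_norm_sq, ← neg_sq a]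
    exact pow_le_pow_left₀ (norm_nonneg _) hdist 2
  have hexpand : Complex.normSq (z - a) = Complex.normSq z - 2 * (a * z.re) + a ^ 2 := by
    simp only [Complex.normSq_apply, Complex.sub_re, Complex.sub_im, Complex.ofReal_re,
      Complex.ofReal_im]
    ring
  have hpos : 0 < a * z.re := by linarith [Complex.normSq_pos.2 hz0]
  exact neg_of_mul_pos_right hpos ha

theorem re_neg_of_sum_erase_abs_le_neg_diag {n : Type*} [Fintype n] [DecidableEq n]
    {A : Matrix n n ℝ} (hA : ∀ i, ∑ j ∈ Finset.univ.erase i, |A i j| ≤ -A i i) {μ : ℂ}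
    (hμ : μ ∈ spectrum ℂ (A.map Complex.ofReal)) (hμ0 : μ ≠ 0) : μ.re < 0 := by
  rw [← spectrum_toLin', ← Module.End.hasEigenvalue_iff_mem_spectrum] at hμ
  obtain ⟨i, hi⟩ := eigenvalue_mem_ball hμ
  simp only [map_apply, Complex.norm_real, Real.norm_eq_abs] at hi
  exact re_neg_of_mem_closedBall_neg (Metric.closedBall_subset_closedBall (hA i) hi) hμ0

theorem sum_erase_abs_eq_neg_diag {n R : Type*} [Fintype n] [DecidableEq n]
    [AddCommGroup R] [LinearOrder R] [IsOrderedAddMonoid R] {A : Matrix n n R} {i : n}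
    (hoff : ∀ j, i ≠ j → 0 ≤ A i j) (hrow : ∑ j, A i j = 0) :
    ∑ j ∈ Finset.univ.erase i, |A i j| = -A i i := by
  calc ∑ j ∈ Finset.univ.erase i, |A i j|
    _ = ∑ j ∈ Finset.univ.erase i, A i j :=
      Finset.sum_congr rfl fun j hj ↦ abs_of_nonneg (hoff j (Finset.ne_of_mem_erase hj).symm)
    _ = -A i i := by rw [Finset.sum_erase_eq_sub (Finset.mem_univ i), hrow, zero_sub]

theorem connected_interconnection_spectrum_general {n : Type*} [Fintype n] [DecidableEq n]
    {Γ : Matrix n n ℝ} (hoff : ∀ i j, i ≠ j → 0 ≤ Γ i j) (hrow : ∀ i, ∑ j, Γ i j = 0)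
    (hconn : ∃ k, ∀ i, Relation.ReflTransGen (fun a b ↦ 0 < Γ a b) i k) :
    (Γ.map Complex.ofReal).charpoly.rootMultiplicity 0 = 1 ∧
    ∀ μ ∈ spectrum ℂ (Γ.map Complex.ofReal), μ ≠ 0 → μ.re < 0 := by
  obtain ⟨k, hk⟩ := hconn
  constructor
  · have hmap := rootMultiplicity_charpoly_map Γ Complex.ofRealHom.injective 0
    rw [map_zero] at hmap
    exact hmap.trans (rootMultiplicity_zero_charpoly_eq_one hoff hrow hk)
  · intro μ hμ hμ0
    exact re_neg_of_sum_erase_abs_le_neg_diag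
      (fun i ↦ (sum_erase_abs_eq_neg_diag (hoff i) (hrow i)).le) hμ hμ0

/-- For a connected interconnection `Γ`, zero is an algebraically simple eigenvalue
(a root of multiplicity one of the characteristic polynomial over `ℂ`), and every other
eigenvalue has strictly negative real part. -/
theorem connected_interconnection_spectrum
    (p : ℕ) (Γ : Matrix (Fin p) (Fin p) ℝ) (hΓ : IsConnectedInterconnection Γ) :
    (Γ.map Complex.ofReal).charpoly.rootMultiplicity 0 = 1 ∧
    ∀ μ ∈ spectrum ℂ (Γ.map Complex.ofReal), μ ≠ 0 → μ.re < 0 :=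
  connected_interconnection_spectrum_general hΓ.1.1 hΓ.1.2 hΓ.2
end

section
/- Let Γ ∈ ℝ^{p×p} satisfy Γ1 = 0 and let r ∈ ℝ^p satisfy rᵀΓ = 0 and rᵀ1 = 1. Suppose P, Q ∈ ℝ^{p×p} satisfy the Lyapunov equation (Γ − 1rᵀ)ᵀP + P(Γ − 1rᵀ) = −Q. Define P̂ := (I_p − 1rᵀ)ᵀ P (I_p − 1rᵀ) and Q̂ := (I_p − 1rᵀ)ᵀ Q (I_p − 1rᵀ). Then ΓᵀP̂ + P̂Γ = −Q̂. -/
open Matrix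

/-!
An idempotent `J` with `Γ * J = J * Γ = 0` (here `J = 1rᵀ`) has complement `N = 1 - J` satisfying
`N * Γ = Γ = (Γ - J) * N`. Multiplying the Lyapunov equation for `Γ - J` by `Nᵀ` on the left and
by `N` on the right therefore turns it into the Lyapunov equation for `Γ`.
-/

section Ring

variable {R : Type*} [Ring R] {a b e f : R}

theorem sub_mul_one_sub_of_mul_eq_zero (he : IsIdempotentElem e) (hae : a * e = 0) :
    (a - e) * (1 - e) = a := by
  rw [sub_mul, he.mul_one_sub_self, sub_zero, mul_one_sub, hae, sub_zero]

theorem one_sub_mul_sub_of_mul_eq_zero (he : IsIdempotentElem e) (hea : e * a = 0) :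
    (1 - e) * (a - e) = a := by
  rw [mul_sub, he.one_sub_mul_self, sub_zero, one_sub_mul, hea, sub_zero]

theorem projected_sylvester_equation {x y : R}
    (he : IsIdempotentElem e) (hae : a * e = 0) (hea : e * a = 0)
    (hf : IsIdempotentElem f) (hbf : b * f = 0) (hfb : f * b = 0)
    (hxy : (b - f) * x + x * (a - e) = y) :
    b * ((1 - f) * x * (1 - e)) + (1 - f) * x * (1 - e) * a = (1 - f) * y * (1 - e) := by
  have hb : b * (1 - f) = b := by rw [mul_one_sub, hbf, sub_zero]
  have ha : (1 - e) * a = a := by rw [one_sub_mul, hea, sub_zero]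
  calc b * ((1 - f) * x * (1 - e)) + (1 - f) * x * (1 - e) * a
      = b * (1 - f) * x * (1 - e) + (1 - f) * x * ((1 - e) * a) := by simp only [mul_assoc]
    _ = b * x * (1 - e) + (1 - f) * x * a := by rw [hb, ha]
    _ = (1 - f) * (b - f) * x * (1 - e) + (1 - f) * x * ((a - e) * (1 - e)) := by
        rw [one_sub_mul_sub_of_mul_eq_zero hf hfb, sub_mul_one_sub_of_mul_eq_zero he hae]
    _ = (1 - f) * ((b - f) * x + x * (a - e)) * (1 - e) := by
        simp only [mul_add, add_mul, mul_assoc]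
    _ = (1 - f) * y * (1 - e) := by rw [hxy]

end Ring

section Matrix

variable {n R : Type*} [Fintype n]

theorem isIdempotentElem_vecMulVec [Semiring R] {u v : n → R} (h : v ⬝ᵥ u = 1) :
    IsIdempotentElem (vecMulVec u v) := by
  rw [IsIdempotentElem, vecMulVec_mul_vecMulVec, h, one_smul]

theorem isIdempotentElem_transpose [NonUnitalCommSemiring R] {J : Matrix n n R}
    (hJ : IsIdempotentElem J) : IsIdempotentElem Jᵀ := by
  rw [IsIdempotentElem, ← transpose_mul, hJ.eq]

theorem projected_lyapunov_equation_general [DecidableEq n] [CommRing R] {Γ J P Q : Matrix n n R}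
    (hJ : IsIdempotentElem J) (hΓJ : Γ * J = 0) (hJΓ : J * Γ = 0)
    (hLyap : (Γ - J)ᵀ * P + P * (Γ - J) = -Q) :
    Γᵀ * ((1 - J)ᵀ * P * (1 - J)) + (1 - J)ᵀ * P * (1 - J) * Γ = -((1 - J)ᵀ * Q * (1 - J)) := by
  have hΓJt : Γᵀ * Jᵀ = 0 := by rw [← transpose_mul, hJΓ, transpose_zero]
  have hJΓt : Jᵀ * Γᵀ = 0 := by rw [← transpose_mul, hΓJ, transpose_zero]
  rw [transpose_sub] at hLyap
  rw [transpose_sub, transpose_one, ← neg_mul, ← mul_neg]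
  exact projected_sylvester_equation hJ hΓJ hJΓ (isIdempotentElem_transpose hJ) hΓJt hJΓt hLyap

end Matrix

/-- If `Γ1 = 0`, `rᵀΓ = 0`, `rᵀ1 = 1` and `(Γ - 1rᵀ)ᵀP + P(Γ - 1rᵀ) = -Q`, then the
projected matrices `P̂ = (I - 1rᵀ)ᵀ P (I - 1rᵀ)` and `Q̂ = (I - 1rᵀ)ᵀ Q (I - 1rᵀ)`
satisfy `ΓᵀP̂ + P̂Γ = -Q̂`. -/
theorem projected_lyapunov_equation
    (p : ℕ) (Γ : Matrix (Fin p) (Fin p) ℝ)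
    (hΓ1 : Γ *ᵥ (fun _ => 1) = 0)
    (r : Fin p → ℝ) (hr : r ᵥ* Γ = 0) (hr1 : ∑ i, r i = 1)
    (P Q : Matrix (Fin p) (Fin p) ℝ)
    (hLyap : (Γ - vecMulVec (fun _ => (1 : ℝ)) r)ᵀ * P
        + P * (Γ - vecMulVec (fun _ => (1 : ℝ)) r) = -Q) :
    Γᵀ * ((1 - vecMulVec (fun _ => (1 : ℝ)) r)ᵀ * P * (1 - vecMulVec (fun _ => (1 : ℝ)) r))
      + ((1 - vecMulVec (fun _ => (1 : ℝ)) r)ᵀ * P * (1 - vecMulVec (fun _ => (1 : ℝ)) r)) * Γ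
      = -((1 - vecMulVec (fun _ => (1 : ℝ)) r)ᵀ * Q
            * (1 - vecMulVec (fun _ => (1 : ℝ)) r)) := by
  exact projected_lyapunov_equation_general
    (isIdempotentElem_vecMulVec ((dotProduct_one r).trans hr1))
    (by rw [mul_vecMulVec, hΓ1, zero_vecMulVec]) (by rw [vecMulVec_mul, hr, vecMulVec_zero]) hLyap
end

section
/- Let Γ ∈ ℝ^{p×p}, let r ∈ ℝ^p satisfy rᵀΓ = 0, and let S, M ∈ ℝ^{n×n}. Then for every t ∈ ℝ, (1rᵀ ⊗ I_n) · exp(t(I_p ⊗ S + Γ ⊗ M)) = 1rᵀ ⊗ exp(tS). -/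
open Matrix
open scoped Kronecker

/-!
If `JΓ = 0`, then `J ⊗ I` intertwines `I ⊗ S + Γ ⊗ M` with `I ⊗ S`: both
`(J ⊗ I)(I ⊗ S + Γ ⊗ M)` and `(I ⊗ S)(J ⊗ I)` equal `J ⊗ S`. It therefore intertwines their
exponentials, and `exp (I ⊗ S) = I ⊗ exp S` because `X ↦ I ⊗ X` is a continuous ring homomorphism.
For `J = 1rᵀ` the hypothesis `rᵀΓ = 0` gives `JΓ = 1(rᵀΓ) = 0`.
-/

section Kronecker

-- Instance search finds completeness only for `Matrix.instUniformSpace`, which agrees with the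
-- uniformity of the operator norm by unfolding, but not at instance transparency.
open scoped Norms.Operator in
local instance completeSpace_linftyOp {m n α : Type*} [Fintype m] [Fintype n]
    [SeminormedAddCommGroup α] [CompleteSpace α] :
    @CompleteSpace (Matrix m n α) PseudoMetricSpace.toUniformSpace :=
  (inferInstance : @CompleteSpace (Matrix m n α) (Matrix.instUniformSpace m n α))

variable {m n : Type*} [Fintype m] [DecidableEq m] [Fintype n] [DecidableEq n]

theorem semiconjBy_kronecker_one {R : Type*} [CommSemiring R] {J Γ : Matrix m m R}
    (hJΓ : J * Γ = 0) (S M : Matrix n n R) :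
    SemiconjBy (J ⊗ₖ (1 : Matrix n n R)) ((1 : Matrix m m R) ⊗ₖ S + Γ ⊗ₖ M)
      ((1 : Matrix m m R) ⊗ₖ S) :=
  calc
    J ⊗ₖ 1 * (1 ⊗ₖ S + Γ ⊗ₖ M) = J ⊗ₖ S := by
      rw [mul_add, ← mul_kronecker_mul, ← mul_kronecker_mul, hJΓ, zero_kronecker, add_zero,
        mul_one, one_mul]
    _ = 1 ⊗ₖ S * J ⊗ₖ 1 := by rw [← mul_kronecker_mul, one_mul, mul_one]

theorem semiconjBy_matrix_exp {𝔸 : Type*} [NormedRing 𝔸] [NormedAlgebra ℚ 𝔸]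
    [CompleteSpace 𝔸] {X A B : Matrix m m 𝔸} (h : SemiconjBy X A B) :
    SemiconjBy X (NormedSpace.exp A) (NormedSpace.exp B) :=
  open scoped Norms.Operator in h.exp_right

variable {𝔸 : Type*} [NormedCommRing 𝔸] [NormedAlgebra ℚ 𝔸] [CompleteSpace 𝔸]

theorem exp_one_kronecker (S : Matrix n n 𝔸) :
    NormedSpace.exp ((1 : Matrix m m 𝔸) ⊗ₖ S) = (1 : Matrix m m 𝔸) ⊗ₖ NormedSpace.exp S := by
  let f : Matrix n n 𝔸 →ₐ[𝔸] Matrix (m × n) (m × n) 𝔸 :=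
    (kroneckerAlgEquiv m n 𝔸).toAlgHom.comp Algebra.TensorProduct.includeRight
  have f_apply (X : Matrix n n 𝔸) : f X = 1 ⊗ₖ X := rfl
  have hf : Continuous f := continuous_matrix fun i j =>
    continuous_const.mul (continuous_id.matrix_elem i.2 j.2)
  rw [← f_apply, ← f_apply]
  open scoped Norms.Operator in exact (NormedSpace.map_exp f hf S).symm

theorem one_rT_kron_exp_general {J Γ : Matrix m m 𝔸} (hJΓ : J * Γ = 0) (S M : Matrix n n 𝔸) :
    (J ⊗ₖ (1 : Matrix n n 𝔸)) * NormedSpace.exp ((1 : Matrix m m 𝔸) ⊗ₖ S + Γ ⊗ₖ M)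
      = J ⊗ₖ NormedSpace.exp S :=
  calc
    J ⊗ₖ 1 * NormedSpace.exp (1 ⊗ₖ S + Γ ⊗ₖ M) = NormedSpace.exp (1 ⊗ₖ S) * J ⊗ₖ 1 :=
      semiconjBy_matrix_exp (semiconjBy_kronecker_one hJΓ S M)
    _ = 1 ⊗ₖ NormedSpace.exp S * J ⊗ₖ 1 := by rw [exp_one_kronecker]
    _ = J ⊗ₖ NormedSpace.exp S := by rw [← mul_kronecker_mul, one_mul, mul_one]

end Kronecker

/-- If `rᵀΓ = 0`, then `(1rᵀ ⊗ I_n) exp(t(I_p ⊗ S + Γ ⊗ M)) = 1rᵀ ⊗ exp(tS)`. -/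
theorem one_rT_kron_exp
    (p n : ℕ) (Γ : Matrix (Fin p) (Fin p) ℝ)
    (r : Fin p → ℝ) (hr : r ᵥ* Γ = 0)
    (S M : Matrix (Fin n) (Fin n) ℝ) (t : ℝ) :
    ((vecMulVec (fun _ => (1 : ℝ)) r : Matrix (Fin p) (Fin p) ℝ)
          ⊗ₖ (1 : Matrix (Fin n) (Fin n) ℝ))
        * NormedSpace.exp (t • ((1 : Matrix (Fin p) (Fin p) ℝ) ⊗ₖ S + Γ ⊗ₖ M))
      = (vecMulVec (fun _ => (1 : ℝ)) r : Matrix (Fin p) (Fin p) ℝ)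
          ⊗ₖ NormedSpace.exp (t • S) := by
  rw [smul_add, ← kronecker_smul, ← kronecker_smul]
  exact one_rT_kron_exp_general (by rw [vecMulVec_mul, hr, vecMulVec_zero]) (t • S) (t • M)
end

section
/- Let A = [[0,1],[0,0]] ∈ ℝ^{2×2} and C = [1 0] ∈ ℝ^{1×2} (a detectable pair with A having a double eigenvalue at 0). There is no L ∈ ℝ^{2×1} such that for every p, every connected interconnection Γ ∈ ℝ^{p×p}, and every initial vector x(0) ∈ ℝ^{2p}, the 2-dimensional blocks x_i(t) of x(t) = exp(t(I_p ⊗ A + Γ ⊗ LC)) x(0) synchronize; i.e., for every L ∈ ℝ^{2×1} there exist p, a connected interconnection Γ ∈ ℝ^{p×p}, x(0) ∈ ℝ^{2p}, and indices i, j such that |x_i(t) − x_j(t)| does not tend to 0 as t → ∞. -/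
open Matrix Filter Topology
open scoped Kronecker

/-!
If `u` is an eigenvector of `Γ` with eigenvalue `μ` and `w` is an eigenvector of `A + μ L C` with
eigenvalue `s`, then `u ⊗ w` is an eigenvector of `I ⊗ A + Γ ⊗ L C` with eigenvalue `s`; if moreover
`u` is not constant and `0 ≤ re s`, the real or the imaginary part of `u ⊗ w` is an initial state
whose blocks do not synchronize. For `L = (l, m)ᵀ` the eigenvalues `s` are the roots of
`s² = μ (l s + m)`, and circulant interconnections on three nodes, whose eigenvectors are powers of
a cube root of unity `ω`, leave enough freedom for `μ`. If `l ≤ 0` or `m ≤ 0`, the eigenvalue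
`μ = -3` of the complete graph gives a quadratic with a root in the closed right half-plane. If
`l, m > 0`, real negative `μ` always yields stability, but the directed cycle with small weight `a`
has `μ = a (ω - 1)`, and at `a = m / (6 l²)` one of the roots `s` reaches the imaginary axis.
-/

section Exponential

variable {n : Type*} [Fintype n] [DecidableEq n]

open scoped Matrix.Norms.Operator

theorem pow_mulVec_of_mulVec_eq_smul {R : Type*} [CommSemiring R] {M : Matrix n n R} {v : n → R}
    {s : R} (h : M *ᵥ v = s • v) (m : ℕ) : M ^ m *ᵥ v = s ^ m • v := by
  induction m with
  | zero => simp
  | succ m ih => rw [pow_succ, ← mulVec_mulVec, h, mulVec_smul, ih, smul_smul, ← pow_succ']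

theorem exp_mulVec_of_mulVec_eq_smul {𝕜 : Type*} [RCLike 𝕜] {M : Matrix n n 𝕜} {v : n → 𝕜}
    {s : 𝕜} (h : M *ᵥ v = s • v) : NormedSpace.exp M *ᵥ v = NormedSpace.exp s • v := by
  have hM := (NormedSpace.exp_series_hasSum_exp' (𝕂 := 𝕜) M).map
    ((mulVecBilin 𝕜 𝕜).flip v) (LinearMap.continuous_of_finiteDimensional _)
  have hs := (NormedSpace.exp_series_hasSum_exp' (𝕂 := 𝕜) s).smul_const v
  refine hM.unique (hs.congr_fun fun m => ?_)
  simp [pow_mulVec_of_mulVec_eq_smul h, smul_smul]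

theorem exp_map_ofReal (M : Matrix n n ℝ) :
    NormedSpace.exp (M.map Complex.ofReal) = (NormedSpace.exp M).map Complex.ofReal :=
  (NormedSpace.map_exp Complex.ofRealHom.mapMatrix
    (continuous_id.matrix_map Complex.continuous_ofReal) M).symm

end Exponential

theorem map_ofReal_mulVec {m n : Type*} [Fintype n] (N : Matrix m n ℝ) (v : n → ℂ) (i : m) :
    (N.map Complex.ofReal *ᵥ v) i =
      (N *ᵥ fun j => (v j).re) i + (N *ᵥ fun j => (v j).im) i * Complex.I := by
  apply Complex.ext <;> simp [mulVec, dotProduct]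

section Synchronization

variable {ι κ : Type*} [Fintype ι] [DecidableEq ι] [Fintype κ] [DecidableEq κ]

/-- Any two blocks of any solution `t ↦ exp (t M) x₀` of `x' = M x` approach each other as
`t → ∞`; here `(i, k)` indexes the `k`-th entry of the `i`-th block. Complex scalars are allowed so
that eigenvectors of a real system can be used. -/
def Synchronizes {𝕜 : Type*} [RCLike 𝕜] (M : Matrix (ι × κ) (ι × κ) 𝕜) : Prop :=
  ∀ (x₀ : ι × κ → 𝕜) (i j : ι),
    Tendsto (fun (t : ℝ) (k : κ) => (NormedSpace.exp (t • M) *ᵥ x₀) (i, k) -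
      (NormedSpace.exp (t • M) *ᵥ x₀) (j, k)) atTop (𝓝 0)

theorem Synchronizes.map_ofReal {M : Matrix (ι × κ) (ι × κ) ℝ} (h : Synchronizes M) :
    Synchronizes (M.map Complex.ofReal) := by
  intro x₀ i j
  refine tendsto_pi_nhds.2 fun k => ?_
  have hre := tendsto_pi_nhds.1 (h (fun q => (x₀ q).re) i j) k
  have him := tendsto_pi_nhds.1 (h (fun q => (x₀ q).im) i j) k
  have hsum := hre.ofReal.add (him.ofReal.mul_const Complex.I)
  simp only [Pi.zero_apply, Complex.ofReal_zero, zero_mul, add_zero] at hsum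
  refine hsum.congr fun t => ?_
  have hsmul : t • M.map Complex.ofReal = (t • M).map Complex.ofReal := by
    ext; simp
  rw [hsmul, exp_map_ofReal, map_ofReal_mulVec, map_ofReal_mulVec]
  push_cast
  ring

theorem not_synchronizes_of_mulVec_eq_smul {M : Matrix (ι × κ) (ι × κ) ℂ} {v : ι × κ → ℂ} {s : ℂ}
    (hv : M *ᵥ v = s • v) (hs : 0 ≤ s.re) {i j : ι} {k : κ} (hij : v (i, k) ≠ v (j, k)) :
    ¬ Synchronizes M := by
  intro hM
  have hexp (t : ℝ) : NormedSpace.exp (t • M) *ᵥ v = Complex.exp (t * s) • v := by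
    rw [Complex.exp_eq_exp_ℂ]
    exact exp_mulVec_of_mulVec_eq_smul (by rw [smul_mulVec, hv, mul_smul]; rfl)
  have hlim := (tendsto_pi_nhds.1 (hM v i j) k).norm
  simp only [hexp, Pi.smul_apply, smul_eq_mul, ← mul_sub, norm_mul, Complex.norm_exp,
    Complex.re_ofReal_mul, Pi.zero_apply, norm_zero] at hlim
  have hbound : ∀ᶠ t : ℝ in atTop,
      ‖v (i, k) - v (j, k)‖ ≤ Real.exp (t * s.re) * ‖v (i, k) - v (j, k)‖ := by
    filter_upwards [eventually_ge_atTop 0] with t ht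
    exact le_mul_of_one_le_left (norm_nonneg _) (Real.one_le_exp (mul_nonneg ht hs))
  exact (norm_pos_iff.2 (sub_ne_zero.2 hij)).not_ge (ge_of_tendsto hlim hbound)

end Synchronization

section Array

variable {R ι κ : Type*} [CommSemiring R]

theorem kronecker_mulVec_mul {l m : Type*} [Fintype ι] [Fintype κ] (A : Matrix l ι R)
    (B : Matrix m κ R) (u : ι → R) (w : κ → R) :
    (A ⊗ₖ B) *ᵥ (fun q => u q.1 * w q.2) = fun q => (A *ᵥ u) q.1 * (B *ᵥ w) q.2 := by
  ext q
  simp only [mulVec, dotProduct, kroneckerMap_apply, Fintype.sum_prod_type, Finset.sum_mul_sum]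
  simp only [mul_mul_mul_comm]

variable [DecidableEq ι]

/-- The state matrix `I ⊗ A + Γ ⊗ D` of an array of identical systems `x' = A x` coupled through
the interconnection `Γ` by the output feedback `D` (the paper's `L C`). -/
def arrayMatrix (Γ : Matrix ι ι R) (A D : Matrix κ κ R) : Matrix (ι × κ) (ι × κ) R :=
  (1 : Matrix ι ι R) ⊗ₖ A + Γ ⊗ₖ D

theorem arrayMatrix_map {S : Type*} [CommSemiring S] (f : R →+* S) (Γ : Matrix ι ι R)
    (A D : Matrix κ κ R) :
    (arrayMatrix Γ A D).map f = arrayMatrix (Γ.map f) (A.map f) (D.map f) := by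
  ext ⟨i, k⟩ ⟨j, l⟩
  simp [arrayMatrix, one_apply, apply_ite f]

theorem arrayMatrix_mulVec [Fintype ι] [Fintype κ] {Γ : Matrix ι ι R} {A D : Matrix κ κ R}
    {u : ι → R} {w : κ → R} {μ s : R} (hu : Γ *ᵥ u = μ • u) (hw : (A + μ • D) *ᵥ w = s • w) :
    arrayMatrix Γ A D *ᵥ (fun q => u q.1 * w q.2) = s • fun q => u q.1 * w q.2 := by
  ext q
  have hwq : (A *ᵥ w) q.2 + μ * (D *ᵥ w) q.2 = s * w q.2 := by
    simpa [add_mulVec, smul_mulVec] using congrFun hw q.2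
  simp only [arrayMatrix, add_mulVec, kronecker_mulVec_mul, one_mulVec, hu, Pi.add_apply,
    Pi.smul_apply, smul_eq_mul]
  rw [mul_left_comm s, ← hwq]
  ring

end Array

theorem not_synchronizes_arrayMatrix {ι κ : Type*} [Fintype ι] [DecidableEq ι] [Fintype κ]
    [DecidableEq κ] {Γ : Matrix ι ι ℝ} {A D : Matrix κ κ ℝ} {u : ι → ℂ} {w : κ → ℂ} {μ s : ℂ}
    (hu : Γ.map Complex.ofReal *ᵥ u = μ • u)
    (hw : (A.map Complex.ofReal + μ • D.map Complex.ofReal) *ᵥ w = s • w) (hs : 0 ≤ s.re)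
    {i j : ι} (hij : u i ≠ u j) {k : κ} (hk : w k ≠ 0) : ¬ Synchronizes (arrayMatrix Γ A D) := by
  intro h
  have hmap : Synchronizes (arrayMatrix (Γ.map Complex.ofReal) (A.map Complex.ofReal)
      (D.map Complex.ofReal)) := arrayMatrix_map Complex.ofRealHom Γ A D ▸ h.map_ofReal
  have hblocks : u i * w k ≠ u j * w k := (mul_left_injective₀ hk).ne hij
  exact not_synchronizes_of_mulVec_eq_smul (arrayMatrix_mulVec hu hw) hs hblocks hmap

theorem doubleIntegrator_mulVec (L : Matrix (Fin 2) (Fin 1) ℝ) {μ s : ℂ}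
    (hs : s ^ 2 = μ * (L 0 0 * s + L 1 0)) :
    (!![(0 : ℝ), 1; 0, 0].map Complex.ofReal +
      μ • (L * !![(1 : ℝ), 0]).map Complex.ofReal) *ᵥ ![1, s - μ * L 0 0] =
      s • ![1, s - μ * L 0 0] := by
  ext k
  fin_cases k
  · simp [mulVec, dotProduct, mul_apply]
  · have hchar : μ * L 1 0 = s * (s - μ * L 0 0) := by linear_combination -hs
    simpa [mulVec, dotProduct, mul_apply] using hchar

section Circulant

theorem pow_val_add_of_pow_eq_one {R : Type*} [Monoid R] {n : ℕ} {ζ : R} (hζ : ζ ^ n = 1)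
    (i j : Fin n) : ζ ^ ((i + j : Fin n) : ℕ) = ζ ^ (i : ℕ) * ζ ^ (j : ℕ) := by
  rw [Fin.val_add, ← pow_eq_pow_mod _ hζ, pow_add]

variable {n : ℕ} [NeZero n]

theorem circulant_mulVec_pow_neg {R : Type*} [CommSemiring R] {ζ : R} (hζ : ζ ^ n = 1)
    (c : Fin n → R) :
    circulant c *ᵥ (fun i => ζ ^ ((-i : Fin n) : ℕ)) =
      (∑ k, c k * ζ ^ (k : ℕ)) • fun i => ζ ^ ((-i : Fin n) : ℕ) := by
  ext i
  simp only [mulVec, dotProduct, circulant_apply, Pi.smul_apply, smul_eq_mul, Finset.sum_mul]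
  refine Fintype.sum_equiv (Equiv.subLeft i) _ _ fun j => ?_
  have hj : i - j + -i = -j := by abel
  rw [Equiv.subLeft_apply, mul_assoc, ← pow_val_add_of_pow_eq_one hζ, hj]

theorem isInterconnection_circulant {c : Fin n → ℝ} (hc : ∀ k, k ≠ 0 → 0 ≤ c k)
    (hsum : ∑ k, c k = 0) : IsInterconnection (circulant c) :=
  ⟨fun _ _ hij => hc _ (sub_ne_zero.2 hij),
    fun i => ((Equiv.subLeft i).sum_comp c).trans hsum⟩

theorem reflTransGen_circulant_zero {c : Fin n → ℝ} (h1 : 0 < c 1) (i : Fin n) :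
    Relation.ReflTransGen (fun a b => 0 < circulant c a b) i 0 := by
  obtain ⟨n, rfl⟩ := Nat.exists_eq_succ_of_ne_zero (NeZero.ne n)
  induction i using Fin.induction with
  | zero => exact .refl
  | succ i ih =>
    refine .head ?_ ih
    rwa [circulant_apply, ← Fin.coeSucc_eq_succ, add_sub_cancel_left]

theorem isConnectedInterconnection_circulant {c : Fin n → ℝ} (hc : ∀ k, k ≠ 0 → 0 ≤ c k)
    (hsum : ∑ k, c k = 0) (h1 : 0 < c 1) : IsConnectedInterconnection (circulant c) :=
  ⟨isInterconnection_circulant hc hsum, 0, reflTransGen_circulant_zero h1⟩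

end Circulant

theorem exists_quadratic_root_re_nonneg {p q : ℝ} (h : p ≤ 0 ∨ q ≤ 0) :
    ∃ s : ℂ, 0 ≤ s.re ∧ s ^ 2 + p * s + q = 0 := by
  rcases h with hp | hq
  · obtain ⟨s, hs⟩ := exists_quadratic_eq_zero (one_ne_zero (α := ℂ)) (b := (p : ℂ)) (c := (q : ℂ))
      (IsAlgClosed.exists_eq_mul_self _)
    rcases le_total 0 s.re with hre | hre
    · exact ⟨s, hre, by linear_combination hs⟩
    · refine ⟨-p - s, ?_, by linear_combination hs⟩
      simp only [Complex.sub_re, Complex.neg_re, Complex.ofReal_re]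
      linarith
  · have hd : √(p ^ 2 - 4 * q) ^ 2 = p ^ 2 - 4 * q := Real.sq_sqrt (by nlinarith)
    have hp : p ≤ √(p ^ 2 - 4 * q) := Real.le_sqrt_of_sq_le (by linarith)
    refine ⟨((√(p ^ 2 - 4 * q) - p) / 2 : ℝ), by rw [Complex.ofReal_re]; linarith, ?_⟩
    norm_cast
    linear_combination hd / 4

theorem sq_add_self_add_one_eq_zero_of_isPrimitiveRoot_three {R : Type*} [CommRing R] [IsDomain R]
    {ω : R} (hω : IsPrimitiveRoot ω 3) : ω ^ 2 + ω + 1 = 0 := by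
  have h := hω.geom_sum_eq_zero (by norm_num)
  simp only [Finset.sum_range_succ, Finset.sum_range_zero] at h
  linear_combination h

theorem re_eq_neg_half_of_isPrimitiveRoot_three {ω : ℂ} (hω : IsPrimitiveRoot ω 3) :
    ω.re = -1 / 2 := by
  have h := sq_add_self_add_one_eq_zero_of_isPrimitiveRoot_three hω
  have hre : ω.re ^ 2 - ω.im ^ 2 + ω.re + 1 = 0 := by
    simpa [sq] using congrArg Complex.re h
  have him : ω.im * (2 * ω.re + 1) = 0 := by
    have him' : ω.re * ω.im + ω.im * ω.re + ω.im = 0 := by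
      simpa [sq] using congrArg Complex.im h
    linear_combination him'
  rcases mul_eq_zero.1 him with h0 | h0
  · rw [h0] at hre
    nlinarith [sq_nonneg (2 * ω.re + 1)]
  · linarith

theorem exists_weights_root_re_nonneg {ω : ℂ} (hω : IsPrimitiveRoot ω 3) (l m : ℝ) :
    ∃ (a b : ℝ) (s : ℂ), 0 < a ∧ 0 ≤ b ∧ 0 ≤ s.re ∧
      s ^ 2 = (-(a + b) + a * ω + b * ω ^ 2) * (l * s + m) := by
  have hsum := sq_add_self_add_one_eq_zero_of_isPrimitiveRoot_three hω
  by_cases h : 3 * l ≤ 0 ∨ 3 * m ≤ 0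
  · obtain ⟨s, hs, hroot⟩ := exists_quadratic_root_re_nonneg h
    refine ⟨1, 1, s, one_pos, zero_le_one, hs, ?_⟩
    push_cast at hroot ⊢
    linear_combination hroot - (l * s + m) * hsum
  · push Not at h
    have hl : 0 < l := by linarith
    have hm : 0 < m := by linarith
    -- As `2 * ω + 1 = ± I * √3`, this root lies on the imaginary axis.
    refine ⟨m / (6 * l ^ 2), 0, (m / (3 * l) : ℝ) * (2 * ω + 1), by positivity, le_rfl, ?_, ?_⟩
    · rw [Complex.re_ofReal_mul]
      norm_num [re_eq_neg_half_of_isPrimitiveRoot_three hω]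
    · have hl0 : (l : ℂ) ≠ 0 := by exact_mod_cast hl.ne'
      push_cast
      field_simp
      linear_combination 18 * (m : ℂ) ^ 2 * hsum

theorem exists_isConnectedInterconnection_circulant_root_re_nonneg {ω : ℂ}
    (hω : IsPrimitiveRoot ω 3) (l m : ℝ) :
    ∃ (c : Fin 3 → ℝ) (s : ℂ), IsConnectedInterconnection (circulant c) ∧ 0 ≤ s.re ∧
      s ^ 2 = (∑ k, (c k : ℂ) * ω ^ (k : ℕ)) * (l * s + m) := by
  obtain ⟨a, b, s, ha, hb, hs, hroot⟩ := exists_weights_root_re_nonneg hω l m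
  refine ⟨![-(a + b), a, b], s, isConnectedInterconnection_circulant ?_ ?_ (by simpa using ha),
    hs, ?_⟩
  · simp [Fin.forall_fin_succ, ha.le, hb]
  · simp [Fin.sum_univ_three]
  · simpa [Fin.sum_univ_three] using hroot

/-- For the detectable pair `A = [[0,1],[0,0]]`, `C = [1 0]` (a double integrator observed
through its first state), no feedback `L ∈ ℝ^{2×1}` synchronizes the array for all connected
interconnections: for every `L` there exist `p`, a connected interconnection `Γ`, an initial
condition `x(0)` and indices `i, j` whose blocks fail to synchronize. -/
theorem double_integrator_not_synchronizable :
    ∀ L : Matrix (Fin 2) (Fin 1) ℝ,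
      ∃ (p : ℕ) (Γ : Matrix (Fin p) (Fin p) ℝ), IsConnectedInterconnection Γ ∧
        ∃ (x0 : Fin p × Fin 2 → ℝ) (i j : Fin p),
          ¬ Tendsto (fun t : ℝ => (fun k : Fin 2 =>
                (NormedSpace.exp (t • ((1 : Matrix (Fin p) (Fin p) ℝ) ⊗ₖ !![(0 : ℝ), 1; 0, 0]
                    + Γ ⊗ₖ (L * !![(1 : ℝ), 0]))) *ᵥ x0) (i, k)
                  - (NormedSpace.exp (t • ((1 : Matrix (Fin p) (Fin p) ℝ) ⊗ₖ !![(0 : ℝ), 1; 0, 0]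
                    + Γ ⊗ₖ (L * !![(1 : ℝ), 0]))) *ᵥ x0) (j, k)))
              atTop (nhds 0) := by
  intro L
  obtain ⟨ω, hω⟩ : ∃ ω : ℂ, IsPrimitiveRoot ω 3 := ⟨_, Complex.isPrimitiveRoot_exp 3 three_ne_zero⟩
  obtain ⟨c, s, hΓ, hs, hroot⟩ :=
    exists_isConnectedInterconnection_circulant_root_re_nonneg hω (L 0 0) (L 1 0)
  refine ⟨3, circulant c, hΓ, ?_⟩
  have hu := circulant_mulVec_pow_neg hω.pow_eq_one fun k => (c k : ℂ)
  rw [← map_circulant] at hu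
  have hne : ω ^ ((-0 : Fin 3) : ℕ) ≠ ω ^ ((-(-1) : Fin 3) : ℕ) := by
    simpa using (hω.ne_one (by norm_num)).symm
  have hsync := not_synchronizes_arrayMatrix hu (doubleIntegrator_mulVec L hroot) hs hne
    (k := 0) one_ne_zero
  simpa only [Synchronizes, arrayMatrix, not_forall] using hsync
end

section
/- Consider the scalar pair C = 1, A = 1 (so n = m = 1 and the coupled array with feedback L ∈ ℝ evolves as x(t) = exp(t(I_p + LΓ)) x(0) for an interconnection Γ ∈ ℝ^{p×p}). There is no L ∈ ℝ such that for every p, every connected interconnection Γ ∈ ℝ^{p×p}, and every x(0) ∈ ℝ^p, the components x_i(t) of x(t) = exp(t(I_p + LΓ)) x(0) synchronize. Indeed, for every L ∈ ℝ there exists ε > 0 with 1 − εL > 0 such that for the connected interconnection Γ = [[−ε, ε],[0, 0]] ∈ ℝ^{2×2} and any x(0) with x₁(0) ≠ x₂(0), one has x₁(t) − x₂(t) = e^{(1−εL)t}(x₁(0) − x₂(0)), which does not tend to 0. -/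
open Matrix Filter Topology
open scoped Kronecker

/-!
The difference of two coordinates of the state is a linear functional of it. If that functional is
a left eigenvector of `Γ` with eigenvalue `-γ`, it is a left eigenvector of `exp (t (I + LΓ))` with
eigenvalue `exp ((1 - γL)t)`, so the disagreement is an exponential mode that does not decay as soon
as `γL ≤ 1`. The two-node array in which one node follows the other with strength `ε` has such a
mode with `γ = ε`, and `ε` may be chosen after `L`.
-/

section LeftEigenvector

variable {n 𝔸 : Type*} [Fintype n] [DecidableEq n]

theorem vecMul_pow_of_vecMul_eq_smul [Semiring 𝔸] {M : Matrix n n 𝔸} {v : n → 𝔸} {μ : 𝔸}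
    (h : v ᵥ* M = μ • v) (k : ℕ) : v ᵥ* M ^ k = μ ^ k • v := by
  induction k with
  | zero => simp
  | succ k ih => rw [pow_succ, ← vecMul_vecMul, ih, smul_vecMul, h, smul_smul, pow_succ]

theorem hasSum_matrix_exp [NormedRing 𝔸] [NormedAlgebra ℚ 𝔸] [CompleteSpace 𝔸]
    (M : Matrix n n 𝔸) :
    HasSum (fun k : ℕ => (k.factorial⁻¹ : ℚ) • M ^ k) (NormedSpace.exp M) := by
  open scoped Matrix.Norms.Operator in
  -- Instance search does not identify the uniformity of the operator norm with the entrywise one.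
  have : @CompleteSpace (Matrix n n 𝔸) PseudoMetricSpace.toUniformSpace :=
    inferInstanceAs (CompleteSpace (Matrix n n 𝔸))
  exact NormedSpace.exp_series_hasSum_exp' (𝕂 := ℚ) M

theorem vecMul_exp_of_vecMul_eq_smul [NormedRing 𝔸] [NormedAlgebra ℚ 𝔸] [CompleteSpace 𝔸]
    {M : Matrix n n 𝔸} {v : n → 𝔸} {μ : 𝔸} (h : v ᵥ* M = μ • v) :
    v ᵥ* NormedSpace.exp M = NormedSpace.exp μ • v := by
  have hterm (k : ℕ) : v ᵥ* ((k.factorial⁻¹ : ℚ) • M ^ k) = ((k.factorial⁻¹ : ℚ) • μ ^ k) • v := by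
    rw [vecMul_smul, vecMul_pow_of_vecMul_eq_smul h, smul_assoc]
  have hM := (hasSum_matrix_exp M).map (AddMonoidHom.mk' (v ᵥ* ·) fun A B => vecMul_add A B v)
    (continuous_const.matrix_vecMul continuous_id)
  simp only [Function.comp_def, AddMonoidHom.mk'_apply, hterm] at hM
  exact hM.unique ((NormedSpace.exp_series_hasSum_exp' (𝕂 := ℚ) μ).smul_const v)

theorem vecMul_smul_one_add_smul [CommSemiring 𝔸] {Γ : Matrix n n 𝔸} {v : n → 𝔸} {μ : 𝔸}
    (h : v ᵥ* Γ = μ • v) (L t : 𝔸) : v ᵥ* (t • (1 + L • Γ)) = ((1 + μ * L) * t) • v := by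
  rw [vecMul_smul, vecMul_add, vecMul_one, vecMul_smul, h]
  module

end LeftEigenvector

theorem not_tendsto_abs_exp_mul_mul_nhds_zero {a c : ℝ} (ha : 0 ≤ a) (hc : c ≠ 0) :
    ¬ Tendsto (fun t : ℝ => |Real.exp (a * t) * c|) atTop (𝓝 0) := by
  intro hlim
  have hbound : ∀ᶠ t : ℝ in atTop, |c| ≤ |Real.exp (a * t) * c| := by
    filter_upwards [eventually_ge_atTop (0 : ℝ)] with t ht
    rw [abs_mul, Real.abs_exp]
    exact le_mul_of_one_le_left (abs_nonneg c) (Real.one_le_exp (mul_nonneg ha ht))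
  exact (abs_pos.mpr hc).not_ge (ge_of_tendsto hlim hbound)

section Disagreement

variable {n : Type*} [Fintype n] [DecidableEq n] {Γ : Matrix n n ℝ} {i j : n} {γ : ℝ}

/-- The state at time `t` of the array of scalar systems with `A = C = 1`, coupled through `Γ` with
feedback `L` and started at `x0`. -/
noncomputable def coupledState (L : ℝ) (Γ : Matrix n n ℝ) (x0 : n → ℝ) (t : ℝ) : n → ℝ :=
  NormedSpace.exp (t • ((1 : Matrix n n ℝ) + L • Γ)) *ᵥ x0

theorem coupledState_sub_coupledState (h : Γ i - Γ j = -γ • (Pi.single i 1 - Pi.single j 1))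
    (L : ℝ) (x0 : n → ℝ) (t : ℝ) :
    coupledState L Γ x0 t i - coupledState L Γ x0 t j
      = Real.exp ((1 - γ * L) * t) * (x0 i - x0 j) := by
  set v : n → ℝ := Pi.single i 1 - Pi.single j 1 with hv
  have v_dotProduct (y : n → ℝ) : v ⬝ᵥ y = y i - y j := by
    rw [hv, sub_dotProduct, single_one_dotProduct, single_one_dotProduct]
  have hΓ : v ᵥ* Γ = -γ • v := by
    rw [← h, hv, sub_vecMul, single_one_vecMul, single_one_vecMul, row_def]
  calc coupledState L Γ x0 t i - coupledState L Γ x0 t j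
      = (v ᵥ* NormedSpace.exp (t • ((1 : Matrix n n ℝ) + L • Γ))) ⬝ᵥ x0 := by
        rw [← v_dotProduct, coupledState, dotProduct_mulVec]
    _ = Real.exp ((1 - γ * L) * t) * (x0 i - x0 j) := by
        rw [vecMul_exp_of_vecMul_eq_smul (vecMul_smul_one_add_smul hΓ L t), smul_dotProduct,
          v_dotProduct, smul_eq_mul, neg_mul, ← sub_eq_add_neg, ← Real.exp_eq_exp_ℝ]

theorem not_tendsto_abs_coupledState_sub {L : ℝ}
    (h : Γ i - Γ j = -γ • (Pi.single i 1 - Pi.single j 1)) (hL : 0 ≤ 1 - γ * L)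
    {x0 : n → ℝ} (hx : x0 i ≠ x0 j) :
    ¬ Tendsto (fun t => |coupledState L Γ x0 t i - coupledState L Γ x0 t j|) atTop (𝓝 0) := by
  simp only [coupledState_sub_coupledState h]
  exact not_tendsto_abs_exp_mul_mul_nhds_zero hL (sub_ne_zero.mpr hx)

end Disagreement

section FollowerLeader

variable {ε : ℝ}

theorem isInterconnection_followerLeader (hε : 0 ≤ ε) : IsInterconnection !![-ε, ε; 0, 0] := by
  constructor
  · intro i j hij
    fin_cases i <;> fin_cases j <;> simp_all
  · simp [Fin.forall_fin_two]

theorem isConnectedInterconnection_followerLeader (hε : 0 < ε) :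
    IsConnectedInterconnection !![-ε, ε; 0, 0] :=
  ⟨isInterconnection_followerLeader hε.le, 1,
    Fin.forall_fin_two.mpr ⟨.single (by simpa using hε), .refl⟩⟩

theorem followerLeader_row_sub_row (ε : ℝ) :
    (!![-ε, ε; 0, 0] : Matrix (Fin 2) (Fin 2) ℝ) 0 - (!![-ε, ε; 0, 0] : Matrix (Fin 2) (Fin 2) ℝ) 1
      = -ε • (Pi.single 0 1 - Pi.single 1 1) := by
  ext k
  fin_cases k <;> simp

end FollowerLeader

/-- For the scalar pair `C = 1`, `A = 1` there is no feedback `L ∈ ℝ` synchronizing the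
array `x(t) = exp(t(I_p + LΓ)) x(0)` for every connected interconnection `Γ`; indeed for
every `L` there is `ε > 0` with `1 - εL > 0` such that for the connected interconnection
`Γ = [[-ε, ε], [0, 0]]` one has `x₁(t) - x₂(t) = e^{(1-εL)t}(x₁(0) - x₂(0))`, which does not
tend to `0` when `x₁(0) ≠ x₂(0)`. -/
theorem scalar_unstable_not_synchronizable :
    (¬ ∃ L : ℝ, ∀ (p : ℕ) (Γ : Matrix (Fin p) (Fin p) ℝ), IsConnectedInterconnection Γ →
        ∀ (x0 : Fin p → ℝ) (i j : Fin p),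
          Tendsto (fun t : ℝ =>
              |(NormedSpace.exp (t • ((1 : Matrix (Fin p) (Fin p) ℝ) + L • Γ)) *ᵥ x0) i
                - (NormedSpace.exp (t • ((1 : Matrix (Fin p) (Fin p) ℝ) + L • Γ)) *ᵥ x0) j|)
            atTop (nhds 0)) ∧
    ∀ L : ℝ, ∃ ε : ℝ, 0 < ε ∧ 0 < 1 - ε * L ∧
      IsConnectedInterconnection !![-ε, ε; 0, 0] ∧
      ∀ x0 : Fin 2 → ℝ,
        (∀ t : ℝ,
          (NormedSpace.exp (t • ((1 : Matrix (Fin 2) (Fin 2) ℝ) + L • !![-ε, ε; 0, 0]))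
              *ᵥ x0) 0
            - (NormedSpace.exp (t • ((1 : Matrix (Fin 2) (Fin 2) ℝ) + L • !![-ε, ε; 0, 0]))
              *ᵥ x0) 1
          = Real.exp ((1 - ε * L) * t) * (x0 0 - x0 1)) ∧
        (x0 0 ≠ x0 1 →
          ¬ Tendsto (fun t : ℝ =>
              |(NormedSpace.exp (t • ((1 : Matrix (Fin 2) (Fin 2) ℝ) + L • !![-ε, ε; 0, 0]))
                  *ᵥ x0) 0
                - (NormedSpace.exp (t • ((1 : Matrix (Fin 2) (Fin 2) ℝ) + L • !![-ε, ε; 0, 0]))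
                  *ᵥ x0) 1|)
            atTop (nhds 0)) := by
  have exists_weak_coupling (L : ℝ) : ∃ ε : ℝ, 0 < ε ∧ 0 < 1 - ε * L :=
    (exists_pos_mul_lt one_pos L).imp fun ε h => ⟨h.1, by linarith [h.2]⟩
  constructor
  · rintro ⟨L, hsync⟩
    obtain ⟨ε, hε, hL⟩ := exists_weak_coupling L
    exact not_tendsto_abs_coupledState_sub (x0 := ![1, 0]) (followerLeader_row_sub_row ε) hL.le
      (by simp) (hsync 2 _ (isConnectedInterconnection_followerLeader hε) ![1, 0] 0 1)
  · intro L
    obtain ⟨ε, hε, hL⟩ := exists_weak_coupling L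
    exact ⟨ε, hε, hL, isConnectedInterconnection_followerLeader hε, fun x0 =>
      ⟨coupledState_sub_coupledState (followerLeader_row_sub_row ε) L x0,
        not_tendsto_abs_coupledState_sub (followerLeader_row_sub_row ε) hL.le⟩⟩
end
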